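/- For every n ≥ 4, the Möbius-ladder of length n (the circulant graph on the 2n vertices ℤ_{2n} in which x and y are adjacent exactly when x − y ≡ ±1 (mod 2n) or x − y ≡ n (mod 2n)) has the same optimal rubbling number as the n-prism C_n□P_2. -/

import Mathlib

open SimpleGraph

/-- A single rubbling move on `G`: either a pebbling move (remove two pebbles at `v`,
add one at an adjacent vertex `u`) or a strict rubbling move (remove one pebble each at
distinct `v` and `w`, both adjacent to `u`, and add one pebble at `u`). -/
def RubblingStep {V : Type*} [DecidableEq V] (G : SimpleGraph V) (p q : V → ℕ) : Prop :=
  (∃ v u, G.Adj v u ∧ 2 ≤ p v ∧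
      q = fun x => if x = v then p x - 2 else if x = u then p x + 1 else p x) ∨
  (∃ v w u, v ≠ w ∧ G.Adj v u ∧ G.Adj w u ∧ 1 ≤ p v ∧ 1 ≤ p w ∧
      q = fun x => if x = v then p x - 1 else if x = w then p x - 1
          else if x = u then p x + 1 else p x)

/-- `q` is obtainable from `p` by an executable rubbling sequence. -/
def RubblingReach {V : Type*} [DecidableEq V] (G : SimpleGraph V) : (V → ℕ) → (V → ℕ) → Prop :=
  Relation.ReflTransGen (RubblingStep G)

/-- The vertex `u` is `k`-reachable from the distribution `p`. -/
def KReachable {V : Type*} [DecidableEq V] (G : SimpleGraph V) (p : V → ℕ) (u : V) (k : ℕ) : Prop :=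
  ∃ q, RubblingReach G p q ∧ k ≤ q u

/-- `p` is solvable: every vertex is reachable. -/
def Solvable {V : Type*} [DecidableEq V] (G : SimpleGraph V) (p : V → ℕ) : Prop :=
  ∀ u, KReachable G p u 1

/-- The optimal rubbling number: the minimum size of a solvable distribution. -/
noncomputable def optRub {V : Type*} [DecidableEq V] [Fintype V] (G : SimpleGraph V) : ℕ :=
  sInf {m | ∃ p : V → ℕ, Solvable G p ∧ ∑ v, p v = m}

/-- The `n`-prism `C_n □ P_2`. -/
def prism (n : ℕ) : SimpleGraph (Fin n × Fin 2) :=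
  cycleGraph n □ pathGraph 2

/-- The Möbius ladder of length `n`: the circulant graph on `ℤ_{2n}` with connection
set `{1, 2n-1, n}`. -/
def mobiusLadder (n : ℕ) : SimpleGraph (ZMod (2 * n)) :=
  SimpleGraph.fromRel (fun x y => x - y = 1 ∨ x - y = (n : ZMod (2 * n)))

namespace Rub

/-! ### Derivation trees -/

/-- `D G u s`: there is a derivation tree with root `u` whose leaves form the multiset `s`. -/
inductive D {V : Type*} (G : SimpleGraph V) : V → Multiset V → Prop
  | leaf (u : V) : D G u {u}
  | node (u a b : V) (s t : Multiset V) (ha : G.Adj a u) (hb : G.Adj b u)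
      (hs : D G a s) (ht : D G b t) : D G u (s + t)

section
variable {V : Type*} [DecidableEq V] {G : SimpleGraph V}

theorem D.subst {u : V} {s : Multiset V} (h : D G u s) {x v w : V} (hv : G.Adj v x)
    (hw : G.Adj w x) (hx : x ∈ s) : D G u (s.erase x + {v} + {w}) := by
  induction h with
  | leaf u =>
    have : x = u := by simpa using hx
    subst this
    have := D.node x v w {v} {w} hv hw (D.leaf v) (D.leaf w)
    simpa using this
  | node u a b s t ha hb hs ht ihs iht =>
    by_cases h1 : x ∈ s
    · have := D.node u a b _ t ha hb (ihs h1) ht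
      rw [Multiset.erase_add_left_pos _ h1]
      convert this using 1
      abel
    · have h2 : x ∈ t := by
        rcases Multiset.mem_add.1 hx with h | h
        · exact absurd h h1
        · exact h
      have := D.node u a b s _ ha hb hs (iht h2)
      rw [Multiset.erase_add_right_pos _ h2]
      convert this using 1
      abel

theorem tree_of_reach {p q : V → ℕ} (h : RubblingReach G p q) {u : V}
    (hu : ∃ s, D G u s ∧ ∀ x, s.count x ≤ q x) : ∃ s, D G u s ∧ ∀ x, s.count x ≤ p x := by
  have key : ∀ (p q : V → ℕ) (v w x : V), G.Adj v x → G.Adj w x →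
      (∀ y, q y + (if y = v then 1 else 0) + (if y = w then 1 else 0)
        ≤ p y + (if y = x then 1 else 0)) →
      (∃ s, D G u s ∧ ∀ x, s.count x ≤ q x) → ∃ s, D G u s ∧ ∀ x, s.count x ≤ p x := by
    rintro p q v w x hv hw hpq ⟨s, hs, hc⟩
    by_cases hx : x ∈ s
    · refine ⟨_, hs.subst hv hw hx, fun y => ?_⟩
      have h1 := hpq y
      have h2 := hc y
      have h3 : 1 ≤ s.count x := Multiset.one_le_count_iff_mem.2 hx
      simp only [Multiset.count_add, Multiset.count_singleton]
      by_cases hy : y = x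
      · subst hy
        rw [Multiset.count_erase_self]
        simp at h1 
        omega
      · rw [Multiset.count_erase_of_ne hy]
        simp [hy] at h1
        omega
    · refine ⟨s, hs, fun y => ?_⟩
      have h1 := hpq y
      have h2 := hc y
      by_cases hy : y = x
      · subst hy
        rw [Multiset.count_eq_zero_of_notMem hx]
        omega
      · simp [hy] at h1
        omega
  induction h using Relation.ReflTransGen.head_induction_on with
  | refl => exact hu
  | head hstep _ ih =>
    rename_i a b
    rcases hstep with ⟨v, u', hadj, h2, rfl⟩ | ⟨v, w, u', hne, h1, h2, h3, h4, rfl⟩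
    · refine key _ _ v v u' hadj hadj (fun y => ?_) ih
      have := hadj.ne
      by_cases e1 : y = v
      · subst e1; simp [this]; omega
      · by_cases e2 : y = u'
        · subst e2; simp [e1]
        · simp [e1, e2]
    · refine key _ _ v w u' h1 h2 (fun y => ?_) ih
      have n1 := h1.ne
      have n2 := h2.ne
      by_cases e1 : y = v
      · subst e1; simp [n1, hne]; omega
      · by_cases e2 : y = w
        · subst e2; simp [e1, n2]; omega
        · by_cases e3 : y = u'
          · subst e3; simp [e1, e2]
          · simp [e1, e2, e3]

theorem tree_of_kreach {p : V → ℕ} {u : V} (h : KReachable G p u 1) :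
    ∃ s, D G u s ∧ ∀ x, s.count x ≤ p x := by
  obtain ⟨q, hq, h1⟩ := h
  refine tree_of_reach hq ⟨{u}, D.leaf u, fun x => ?_⟩
  rw [Multiset.count_singleton]
  split_ifs with hx
  · subst hx; exact h1
  · exact Nat.zero_le _

theorem reach_of_tree {u : V} {s : Multiset V} (h : D G u s) :
    ∀ p r : V → ℕ, (∀ x, r x + s.count x ≤ p x) →
      ∃ q, RubblingReach G p q ∧ ∀ x, r x + (if x = u then 1 else 0) ≤ q x := by
  induction h with
  | leaf u =>
    intro p r h
    refine ⟨p, Relation.ReflTransGen.refl, fun x => ?_⟩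
    have := h x
    rwa [Multiset.count_singleton] at this
  | node u a b s t ha hb hs ht ihs iht =>
    intro p r h
    obtain ⟨q1, hq1, h1⟩ := ihs p (fun x => r x + t.count x) (fun x => by
      have := h x
      rw [Multiset.count_add] at this
      omega)
    obtain ⟨q2, hq2, h2⟩ := iht q1 (fun x => r x + (if x = a then 1 else 0)) (fun x => by
      have := h1 x
      omega)
    have n1 := ha.ne
    have n2 := hb.ne
    by_cases hab : a = b
    · subst hab
      have h3 := h2 a
      simp at h3
      refine ⟨_, (hq1.trans hq2).tail (Or.inl ⟨a, u, ha, by omega, rfl⟩), fun x => ?_⟩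
      have := h2 x
      by_cases e1 : x = a
      · subst e1; simp [n1]; omega
      · by_cases e2 : x = u
        · subst e2; simp [e1] at this ⊢; omega
        · simp [e1, e2] at this ⊢; omega
    · have h3 := h2 a
      have h4 := h2 b
      simp at h3 h4
      refine ⟨_, (hq1.trans hq2).tail
        (Or.inr ⟨a, b, u, hab, ha, hb, by omega, by omega, rfl⟩), fun x => ?_⟩
      have := h2 x
      by_cases e1 : x = a
      · subst e1; simp [n1, hab] at this ⊢; omega
      · by_cases e3 : x = b
        · subst e3; simp [e1, n2] at this ⊢; omega
        · by_cases e2 : x = u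
          · subst e2; simp [e1, e3] at this ⊢; omega
          · simp [e1, e2, e3] at this ⊢; omega

theorem kreach_of_tree {p : V → ℕ} {u : V} {s : Multiset V} (h : D G u s)
    (hc : ∀ x, s.count x ≤ p x) : KReachable G p u 1 := by
  obtain ⟨q, hq, h1⟩ := reach_of_tree h p (fun _ => 0) (fun x => by simpa using hc x)
  exact ⟨q, hq, by simpa using h1 u⟩
end

/-! ### One-sided capacities on the infinite ladder -/

/-- `Lc q i x y`: an over-approximation of "using columns at most `i` only, one can gather
`x` pebbles at the top and `y` pebbles at the bottom of column `i`". -/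
inductive Lc (q : ℤ → Bool → ℕ) : ℤ → ℕ → ℕ → Prop
  | zero (i : ℤ) : Lc q i 0 0
  | step (i j : ℤ) (a b x y : ℕ) (h : Lc q i a b) (hj : j = i + 1)
      (h1 : 4 * x + 2 * y ≤ 4 * q j true + 2 * q j false + 2 * a + b)
      (h2 : 4 * y + 2 * x ≤ 4 * q j false + 2 * q j true + 2 * b + a) : Lc q j x y

theorem Lc.inv {q : ℤ → Bool → ℕ} {i : ℤ} {x y : ℕ} (h : Lc q i x y) :
    ∃ a b, Lc q (i - 1) a b ∧ 4 * x + 2 * y ≤ 4 * q i true + 2 * q i false + 2 * a + b ∧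
      4 * y + 2 * x ≤ 4 * q i false + 2 * q i true + 2 * b + a := by
  cases h with
  | zero => exact ⟨0, 0, Lc.zero _, by omega, by omega⟩
  | step i' _ a b _ _ h hj h1 h2 =>
    refine ⟨a, b, ?_, h1, h2⟩
    have : i - 1 = i' := by omega
    rwa [this]

theorem Lc.mono {q q' : ℤ → Bool → ℕ} (hq : ∀ i j, q i j ≤ q' i j) {i : ℤ} {x y : ℕ}
    (h : Lc q i x y) : Lc q' i x y := by
  induction h with
  | zero i => exact Lc.zero i
  | step i j a b x y h hj h1 h2 ih =>
    have := hq j true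
    have := hq j false
    exact Lc.step i j a b x y ih hj (by omega) (by omega)

theorem Lc.add {q q' : ℤ → Bool → ℕ} {i : ℤ} {x y x' y' : ℕ}
    (h : Lc q i x y) (h' : Lc q' i x' y') :
    Lc (fun i j => q i j + q' i j) i (x + x') (y + y') := by
  induction h generalizing x' y' with
  | zero i => simpa using h'.mono (fun i j => by omega)
  | step i j a b x y h hj h1 h2 ih =>
    obtain ⟨a', b', h3, h4, h5⟩ := h'.inv
    have e : j - 1 = i := by omega
    rw [e] at h3
    exact Lc.step i j _ _ _ _ (ih h3) hj (by omega) (by omega)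

theorem Lc.shift {q q' : ℤ → Bool → ℕ} {i : ℤ} {x y : ℕ} (h : Lc q i x y) (c : ℤ)
    (hq : ∀ k l, q' (k + c) l = q k l) : Lc q' (i + c) x y := by
  induction h with
  | zero i => exact Lc.zero _
  | step i j a b x y h hj h1 h2 ih =>
    refine Lc.step (i + c) (j + c) a b x y ih (by omega) ?_ ?_ <;> simp only [hq] <;> omega

theorem Lc.bound {q : ℤ → Bool → ℕ} {B : ℕ} (hB : ∀ i, q i true + q i false ≤ B)
    {i : ℤ} {x y : ℕ} (h : Lc q i x y) : x + y ≤ 2 * B := by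
  induction h with
  | zero i => omega
  | step i j a b x y h hj h1 h2 ih =>
    have := hB j
    omega

/-- Reflection of a distribution on the infinite ladder. -/
def rf (q : ℤ → Bool → ℕ) : ℤ → Bool → ℕ := fun k l => q (-k) l

/-- Weighted reachability with target weight `m`. -/
def Cw (m : ℕ) (q : ℤ → Bool → ℕ) (i : ℤ) (j : Bool) : Prop :=
  ∃ x y x' y', Lc q (i - 1) x y ∧ Lc (rf q) (-i - 1) x' y' ∧
    (bif j then m ≤ 4 * q i true + 2 * q i false + 2 * (x + x') + (y + y')
      else m ≤ 4 * q i false + 2 * q i true + 2 * (y + y') + (x + x'))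

theorem rf_rf (q : ℤ → Bool → ℕ) : rf (rf q) = q := by
  funext k l; simp [rf]

theorem Cw.refl {m : ℕ} {q : ℤ → Bool → ℕ} {i : ℤ} {j : Bool} (h : Cw m q i j) :
    Cw m (rf q) (-i) j := by
  obtain ⟨x, y, x', y', h1, h2, h3⟩ := h
  refine ⟨x', y', x, y, h2, ?_, ?_⟩
  · rw [rf_rf]
    simpa using h1
  · cases j <;> simp only [rf, neg_neg, cond_true, cond_false] at h3 ⊢ <;> omega

theorem Cw.vert {q : ℤ → Bool → ℕ} {i : ℤ} {j : Bool} (h : Cw 4 q i (!j)) : Cw 2 q i j := by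
  obtain ⟨x, y, x', y', h1, h2, h3⟩ := h
  refine ⟨x, y, x', y', h1, h2, ?_⟩
  cases j <;> simp only [Bool.not_true, Bool.not_false, cond_true, cond_false] at h3 ⊢ <;> omega

theorem Cw.left {q : ℤ → Bool → ℕ} {i : ℤ} {j : Bool} (h : Cw 4 q (i - 1) j) : Cw 2 q i j := by
  obtain ⟨x, y, x', y', h1, h2, h3⟩ := h
  obtain ⟨a, b, h4, h5, h6⟩ := h2.inv
  have e1 : -(i - 1) - 1 - 1 = -i - 1 := by ring
  have e2 : rf q (-(i - 1) - 1) = q i := by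
    funext l; simp only [rf]; congr 1; ring
  rw [e1] at h4
  rw [e2] at h5 h6
  by_cases hz : x' + y' = 0
  · have hx : x' = 0 := by omega
    have hy : y' = 0 := by omega
    subst hx hy
    cases j
    · refine ⟨0, 1, 0, 0, Lc.step (i - 1 - 1) (i - 1) x y 0 1 h1 (by ring) ?_ ?_, Lc.zero _, ?_⟩ <;>
        simp only [cond_true, cond_false] at h3 ⊢ <;> omega
    · refine ⟨1, 0, 0, 0, Lc.step (i - 1 - 1) (i - 1) x y 1 0 h1 (by ring) ?_ ?_, Lc.zero _, ?_⟩ <;>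
        simp only [cond_true, cond_false] at h3 ⊢ <;> omega
  · refine ⟨0, 0, a, b, Lc.zero _, h4, ?_⟩
    cases j <;> simp only [cond_true, cond_false] <;> omega

theorem Cw.right {q : ℤ → Bool → ℕ} {i : ℤ} {j : Bool} (h : Cw 4 q (i + 1) j) : Cw 2 q i j := by
  have h1 := h.refl
  have e : -(i + 1) = -i - 1 := by ring
  rw [e] at h1
  have h2 := h1.left.refl
  rwa [rf_rf, neg_neg] at h2

theorem Cw.add {q q' : ℤ → Bool → ℕ} {i : ℤ} {j : Bool} (h : Cw 2 q i j) (h' : Cw 2 q' i j) :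
    Cw 4 (fun i j => q i j + q' i j) i j := by
  obtain ⟨x, y, x', y', h1, h2, h3⟩ := h
  obtain ⟨a, b, a', b', k1, k2, k3⟩ := h'
  refine ⟨_, _, _, _, h1.add k1, h2.add k2, ?_⟩
  cases j <;> simp only [cond_true, cond_false] at h3 k3 ⊢ <;> omega

theorem Cw.mono {m : ℕ} {q q' : ℤ → Bool → ℕ} (hq : ∀ i j, q i j ≤ q' i j) {i : ℤ} {j : Bool}
    (h : Cw m q i j) : Cw m q' i j := by
  obtain ⟨x, y, x', y', h1, h2, h3⟩ := h
  refine ⟨_, _, _, _, h1.mono hq, h2.mono (fun k l => hq (-k) l), ?_⟩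
  have := hq i true
  have := hq i false
  cases j <;> simp only [cond_true, cond_false] at h3 ⊢ <;> omega

theorem Cw_of_tree {V : Type*} [DecidableEq V] {G : SimpleGraph V} (f : ℤ → Bool → V)
    (hf : ∀ i j a, G.Adj a (f i j) → a = f (i - 1) j ∨ a = f (i + 1) j ∨ a = f i (!j))
    {u : V} {s : Multiset V} (h : D G u s) :
    ∀ i j, u = f i j → Cw 4 (fun k l => s.count (f k l)) i j := by
  induction h with
  | leaf u =>
    rintro i j rfl
    refine ⟨0, 0, 0, 0, Lc.zero _, Lc.zero _, ?_⟩
    cases j <;> simp only [cond_true, cond_false, Multiset.count_singleton_self] <;> omega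
  | node u a b s t ha hb hs ht ihs iht =>
    rintro i j rfl
    have main : ∀ (a : V) (s : Multiset V), G.Adj a (f i j) →
        (∀ i j, a = f i j → Cw 4 (fun k l => s.count (f k l)) i j) →
        Cw 2 (fun k l => s.count (f k l)) i j := by
      intro a s ha ih
      rcases hf i j a ha with h | h | h
      · exact (ih _ _ h).left
      · exact (ih _ _ h).right
      · exact (ih _ _ h).vert
    simpa only [Multiset.count_add] using (main a s ha ihs).add (main b t hb iht)

/-! ### The potential -/

/-- maximal total gatherable from one side -/
noncomputable def sm (q : ℤ → Bool → ℕ) (i : ℤ) : ℕ :=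
  sSup {m | ∃ x y, Lc q i x y ∧ x + y = m}

/-- either vertex of column `i` can be `m`-gathered from one side -/
def Full (m : ℕ) (q : ℤ → Bool → ℕ) (i : ℤ) : Prop := Lc q i m 0 ∧ Lc q i 0 m

open Classical in
/-- the potential -/
noncomputable def Gp (q : ℤ → Bool → ℕ) (i : ℤ) : ℕ :=
  if sm q i = 0 then 0
  else if sm q i = 1 then (if Full 1 q i then 2 else 1)
  else if sm q i = 2 then (if Full 2 q i then 6 else 4)
  else if sm q i = 3 then 6 else 2 * sm q i + 2

theorem le_sm {q : ℤ → Bool → ℕ} {B : ℕ} (hB : ∀ i, q i true + q i false ≤ B)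
    {i : ℤ} {x y : ℕ} (h : Lc q i x y) : x + y ≤ sm q i := by
  refine le_csSup ⟨2 * B, ?_⟩ ⟨x, y, h, rfl⟩
  rintro m ⟨x, y, h, rfl⟩
  exact h.bound hB

theorem sm_att {q : ℤ → Bool → ℕ} {B : ℕ} (hB : ∀ i, q i true + q i false ≤ B) (i : ℤ) :
    ∃ x y, Lc q i x y ∧ x + y = sm q i := by
  have := Nat.sSup_mem (s := {m | ∃ x y, Lc q i x y ∧ x + y = m})
    ⟨0, 0, 0, Lc.zero i, rfl⟩ ⟨2 * B, by rintro m ⟨x, y, h, rfl⟩; exact h.bound hB⟩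
  exact this

theorem sm_step {q : ℤ → Bool → ℕ} {B : ℕ} (hB : ∀ i, q i true + q i false ≤ B) (i : ℤ) :
    2 * sm q i ≤ 2 * (q i true + q i false) + sm q (i - 1) := by
  obtain ⟨x, y, h, e⟩ := sm_att hB i
  obtain ⟨a, b, h1, h2, h3⟩ := h.inv
  have := le_sm hB h1
  omega

theorem Gp_cases (q : ℤ → Bool → ℕ) (i : ℤ) :
    (sm q i = 0 ∧ Gp q i = 0) ∨ (sm q i = 1 ∧ Full 1 q i ∧ Gp q i = 2) ∨
    (sm q i = 1 ∧ ¬ Full 1 q i ∧ Gp q i = 1) ∨ (sm q i = 2 ∧ Full 2 q i ∧ Gp q i = 6) ∨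
    (sm q i = 2 ∧ ¬ Full 2 q i ∧ Gp q i = 4) ∨ (sm q i = 3 ∧ Gp q i = 6) ∨
    (4 ≤ sm q i ∧ Gp q i = 2 * sm q i + 2) := by
  unfold Gp
  split_ifs with h0 h1 f1 h2 f2 h3
  · simp [h0]
  · simp [h1, f1]
  · simp [h1, f1]
  · simp [h2, f2]
  · simp [h2, f2]
  · simp [h3]
  · have : 4 ≤ sm q i := by omega
    simp [this]

theorem Gp_pos {q : ℤ → Bool → ℕ} {B : ℕ} (hB : ∀ i, q i true + q i false ≤ B) (i : ℤ)
    (hP : 1 ≤ q i true + q i false) :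
    Gp q i + 2 ≤ Gp q (i - 1) + 3 * (q i true + q i false) := by
  have h1 := sm_step hB i
  have h2 : Full 1 q i → sm q (i - 1) = 0 → q i true + q i false = 1 → False := by
    rintro ⟨k1, k2⟩ hs hp
    obtain ⟨a, b, u1, u2, u3⟩ := k1.inv
    obtain ⟨c, d, v1, v2, v3⟩ := k2.inv
    have := le_sm hB u1
    have := le_sm hB v1
    omega
  have h3 : Full 2 q i → sm q (i - 1) ≤ 2 → q i true + q i false = 1 → False := by
    rintro ⟨k1, k2⟩ hs hp
    obtain ⟨a, b, u1, u2, u3⟩ := k1.inv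
    obtain ⟨c, d, v1, v2, v3⟩ := k2.inv
    have := le_sm hB u1
    have := le_sm hB v1
    omega
  have h4 : Full 2 q i → sm q (i - 1) = 0 → q i true + q i false = 2 → False := by
    rintro ⟨k1, k2⟩ hs hp
    obtain ⟨a, b, u1, u2, u3⟩ := k1.inv
    obtain ⟨c, d, v1, v2, v3⟩ := k2.inv
    have := le_sm hB u1
    have := le_sm hB v1
    omega
  have h5 : Full 2 q i → sm q (i - 1) = 1 → q i true + q i false = 2 → Full 1 q (i - 1) := by
    rintro ⟨k1, k2⟩ hs hp
    obtain ⟨a, b, u1, u2, u3⟩ := k1.inv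
    obtain ⟨c, d, v1, v2, v3⟩ := k2.inv
    have := le_sm hB u1
    have := le_sm hB v1
    have e : a = 1 ∧ b = 0 ∧ c = 0 ∧ d = 1 := by omega
    obtain ⟨rfl, rfl, rfl, rfl⟩ := e
    exact ⟨u1, v1⟩
  generalize q i true + q i false = P at *
  have cn := Gp_cases q i
  have co := Gp_cases q (i - 1)
  by_cases hp1 : P = 1
  · rcases cn with ⟨c1, c2⟩ | ⟨c1, cf, c2⟩ | ⟨c1, cf, c2⟩ | ⟨c1, cf, c2⟩ | ⟨c1, cf, c2⟩ | ⟨c1, c2⟩ |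
      ⟨c1, c2⟩ <;>
    rcases co with ⟨d1, d2⟩ | ⟨d1, df, d2⟩ | ⟨d1, df, d2⟩ | ⟨d1, df, d2⟩ | ⟨d1, df, d2⟩ | ⟨d1, d2⟩ |
      ⟨d1, d2⟩ <;>
    first
      | omega
      | exact (h2 cf d1 hp1).elim
      | exact (h3 cf (by omega) hp1).elim
  · by_cases hp2 : P = 2
    · rcases cn with ⟨c1, c2⟩ | ⟨c1, cf, c2⟩ | ⟨c1, cf, c2⟩ | ⟨c1, cf, c2⟩ | ⟨c1, cf, c2⟩ |
        ⟨c1, c2⟩ | ⟨c1, c2⟩ <;>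
      rcases co with ⟨d1, d2⟩ | ⟨d1, df, d2⟩ | ⟨d1, df, d2⟩ | ⟨d1, df, d2⟩ | ⟨d1, df, d2⟩ |
        ⟨d1, d2⟩ | ⟨d1, d2⟩ <;>
      first
        | omega
        | exact (h4 cf d1 hp2).elim
        | exact (df (h5 cf d1 hp2)).elim
    · rcases cn with ⟨c1, c2⟩ | ⟨c1, -, c2⟩ | ⟨c1, -, c2⟩ | ⟨c1, -, c2⟩ | ⟨c1, -, c2⟩ |
        ⟨c1, c2⟩ | ⟨c1, c2⟩ <;>
      rcases co with ⟨d1, d2⟩ | ⟨d1, -, d2⟩ | ⟨d1, -, d2⟩ | ⟨d1, -, d2⟩ | ⟨d1, -, d2⟩ |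
        ⟨d1, d2⟩ | ⟨d1, d2⟩ <;> omega

theorem Gp_zero {q : ℤ → Bool → ℕ} {B : ℕ} (hB : ∀ i, q i true + q i false ≤ B) (i : ℤ)
    (hP : q i true + q i false = 0) :
    Gp q i + 4 ≤ Gp q (i - 1) ∨ (sm q (i - 1) = 0 ∧ Gp q i ≤ Gp q (i - 1)) ∨
    (sm q (i - 1) = 1 ∧ Full 1 q (i - 1) ∧ Gp q i + 2 ≤ Gp q (i - 1)) ∨
    (sm q (i - 1) = 1 ∧ ¬ Full 1 q (i - 1) ∧ Gp q i + 1 ≤ Gp q (i - 1)) ∨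
    (sm q (i - 1) = 2 ∧ ¬ Full 2 q (i - 1) ∧ Gp q i + 3 ≤ Gp q (i - 1)) := by
  have h1 := sm_step hB i
  have h6 : Full 1 q i → sm q (i - 1) = 2 → Full 2 q (i - 1) := by
    rintro ⟨k1, k2⟩ hs
    obtain ⟨a, b, u1, u2, u3⟩ := k1.inv
    obtain ⟨c, d, v1, v2, v3⟩ := k2.inv
    have := le_sm hB u1
    have := le_sm hB v1
    have e : a = 2 ∧ b = 0 ∧ c = 0 ∧ d = 2 := by omega
    obtain ⟨rfl, rfl, rfl, rfl⟩ := e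
    exact ⟨u1, v1⟩
  have cn := Gp_cases q i
  have co := Gp_cases q (i - 1)
  rcases cn with ⟨c1, c2⟩ | ⟨c1, cf, c2⟩ | ⟨c1, cf, c2⟩ | ⟨c1, cf, c2⟩ | ⟨c1, cf, c2⟩ |
    ⟨c1, c2⟩ | ⟨c1, c2⟩ <;>
  rcases co with ⟨d1, d2⟩ | ⟨d1, df, d2⟩ | ⟨d1, df, d2⟩ | ⟨d1, df, d2⟩ | ⟨d1, df, d2⟩ |
    ⟨d1, d2⟩ | ⟨d1, d2⟩ <;>
  first
    | omega
    | exact Or.inr (Or.inr (Or.inl ⟨d1, df, by omega⟩))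
    | exact Or.inr (Or.inr (Or.inr (Or.inl ⟨d1, df, by omega⟩)))
    | exact Or.inr (Or.inr (Or.inr (Or.inr ⟨d1, df, by omega⟩)))
    | exact (df (h6 cf d1)).elim

theorem col_ineq {q : ℤ → Bool → ℕ} {B : ℕ} (hB : ∀ i, q i true + q i false ≤ B)
    (hC : ∀ i j, Cw 4 q i j) (i : ℤ) :
    Gp q i + Gp (rf q) (-i) + 4 ≤
      Gp q (i - 1) + Gp (rf q) (-i - 1) + 6 * (q i true + q i false) := by
  have hB' : ∀ i, rf q i true + rf q i false ≤ B := fun i => hB (-i)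
  have e : ∀ l, rf q (-i) l = q i l := fun l => by simp [rf]
  by_cases hP : 1 ≤ q i true + q i false
  · have h1 := Gp_pos hB i hP
    have h2 := Gp_pos hB' (-i) (by simpa only [e] using hP)
    simp only [e] at h2
    omega
  · have hP0 : q i true + q i false = 0 := by omega
    have h1 := Gp_zero hB i hP0
    have h2 := Gp_zero hB' (-i) (by simpa only [e] using hP0)
    obtain ⟨x, y, x', y', t1, t2, t3⟩ := hC i true
    obtain ⟨z, w, z', w', b1, b2, b3⟩ := hC i false
    simp only [cond_true, cond_false] at t3 b3
    have m1 := le_sm hB t1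
    have m2 := le_sm hB' t2
    have m3 := le_sm hB b1
    have m4 := le_sm hB' b2
    have F1 : sm q (i - 1) = 1 → sm (rf q) (-i - 1) = 1 →
        Full 1 q (i - 1) ∧ Full 1 (rf q) (-i - 1) := by
      intro s1 s2
      have e : (x = 1 ∧ y = 0) ∧ (x' = 1 ∧ y' = 0) ∧ (z = 0 ∧ w = 1) ∧ (z' = 0 ∧ w' = 1) := by omega
      obtain ⟨⟨rfl, rfl⟩, ⟨rfl, rfl⟩, ⟨rfl, rfl⟩, ⟨rfl, rfl⟩⟩ := e
      exact ⟨⟨t1, b1⟩, ⟨t2, b2⟩⟩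
    have F2 : sm q (i - 1) = 2 → sm (rf q) (-i - 1) = 0 → Full 2 q (i - 1) := by
      intro s1 s2
      have e : (x = 2 ∧ y = 0) ∧ (z = 0 ∧ w = 2) := by omega
      obtain ⟨⟨rfl, rfl⟩, ⟨rfl, rfl⟩⟩ := e
      exact ⟨t1, b1⟩
    have F3 : sm q (i - 1) = 0 → sm (rf q) (-i - 1) = 2 → Full 2 (rf q) (-i - 1) := by
      intro s1 s2
      have e : (x' = 2 ∧ y' = 0) ∧ (z' = 0 ∧ w' = 2) := by omega
      obtain ⟨⟨rfl, rfl⟩, ⟨rfl, rfl⟩⟩ := e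
      exact ⟨t2, b2⟩
    have mono1 : Gp q i ≤ Gp q (i - 1) := by omega
    have mono2 : Gp (rf q) (-i) ≤ Gp (rf q) (-i - 1) := by omega
    rcases h1 with c | ⟨c, d⟩ | ⟨c, f, d⟩ | ⟨c, f, d⟩ | ⟨c, f, d⟩ <;>
    rcases h2 with c' | ⟨c', d'⟩ | ⟨c', f', d'⟩ | ⟨c', f', d'⟩ | ⟨c', f', d'⟩ <;>
    first
      | omega
      | exact (f (F1 c c').1).elim
      | exact (f' (F1 c c').2).elim
      | exact (f (F2 c c')).elim
      | exact (f' (F3 c c')).elim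

theorem Gp_congr {q q' : ℤ → Bool → ℕ} {i i' : ℤ} (h : ∀ x y, Lc q i x y ↔ Lc q' i' x y) :
    Gp q i = Gp q' i' := by
  have h1 : sm q i = sm q' i' := by simp only [sm, h]
  have h2 : ∀ m, Full m q i ↔ Full m q' i' := fun m => by simp only [Full, h]
  unfold Gp
  rw [h1, propext (h2 1), propext (h2 2)]

theorem Gp_periodic {q : ℤ → Bool → ℕ} {N : ℤ} (hN : ∀ i l, q (i + N) l = q i l) (i : ℤ) :
    Gp q (i + N) = Gp q i := by
  refine Gp_congr fun x y => ⟨fun h => ?_, fun h => h.shift N hN⟩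
  have := h.shift (-N) (q' := q) (fun k l => by
    rw [← hN (k + -N) l]; congr 1; ring)
  simpa using this

theorem density {q : ℤ → Bool → ℕ} {B : ℕ} (hB : ∀ i, q i true + q i false ≤ B)
    (hC : ∀ i j, Cw 4 q i j) (N : ℕ) (hN : ∀ i l, q (i + N) l = q i l) :
    2 * N ≤ 3 * ∑ i ∈ Finset.range N, (q i true + q i false) := by
  let F : ℕ → ℤ := fun k => (Gp q ((k : ℤ) - 1) : ℤ) - Gp (rf q) (-(k : ℤ))
  have hF : F N = F 0 := by
    have h1 := Gp_periodic (q := q) (N := N) hN (-1)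
    have h2 := Gp_periodic (q := rf q) (N := N) (fun i l => by
      simp only [rf]; rw [← hN (-(i + N)) l]; congr 1; ring) (-(N : ℤ))
    have e1 : (-1 + (N : ℤ)) = N - 1 := by ring
    rw [e1] at h1
    simp only [neg_add_cancel] at h2
    simp only [F, h1, ← h2]
    simp
  have hs := Finset.sum_range_sub F N
  rw [hF, sub_self] at hs
  have hle : ∀ k ∈ Finset.range N, F (k + 1) - F k ≤
      6 * ((q k true + q k false : ℕ) : ℤ) - 4 := by
    intro k _
    have := col_ineq hB hC (k : ℤ)
    have e1 : ((k + 1 : ℕ) : ℤ) - 1 = k := by push_cast; ring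
    have e2 : -((k + 1 : ℕ) : ℤ) = -(k : ℤ) - 1 := by push_cast; ring
    simp only [F, e1, e2]
    omega
  have := Finset.sum_le_sum hle
  rw [hs, Finset.sum_sub_distrib, ← Finset.mul_sum] at this
  simp only [Finset.sum_const, Finset.card_range, nsmul_eq_mul] at this
  rw [← Nat.cast_sum] at this
  omega

theorem lower {V : Type*} [DecidableEq V] [Fintype V] {G : SimpleGraph V} (f : ℤ → Bool → V)
    (hf : ∀ i j a, G.Adj a (f i j) → a = f (i - 1) j ∨ a = f (i + 1) j ∨ a = f i (!j))
    (N : ℕ) (hN : ∀ i l, f (i + N) l = f i l) {p : V → ℕ} (hp : Solvable G p) :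
    2 * N ≤ 3 * ∑ i ∈ Finset.range N, (p (f i true) + p (f i false)) := by
  have hle : ∀ v, p v ≤ ∑ v, p v := fun v => Finset.single_le_sum (fun _ _ => Nat.zero_le _)
    (Finset.mem_univ v)
  refine density (q := fun i j => p (f i j)) (B := 2 * ∑ v, p v) (fun i => ?_) (fun i j => ?_) N
    (fun i l => by rw [hN])
  · have := hle (f i true)
    have := hle (f i false)
    omega
  · obtain ⟨s, hs, hc⟩ := tree_of_kreach (hp (f i j))
    exact (Cw_of_tree f hf hs i j rfl).mono (fun k l => hc _)

end Rub
namespace Rub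

/-! ### The upper bound -/

section
variable {V : Type*} [DecidableEq V] {G : SimpleGraph V}

/-- The pebbled vertex of a column. -/
def pe (g : ℕ → Bool → V) (k : ℕ) : V := g k (decide (k % 3 = 0))

/-- A derivation tree whose leaves are the pebbles of the columns in the list `l`. -/
def Dl (G : SimpleGraph V) (g : ℕ → Bool → V) (u : V) (l : List ℕ) : Prop :=
  D G u ((l.map (pe g) : List V) : Multiset V)


theorem Dl.node {g : ℕ → Bool → V} {u a b : V} {l m : List ℕ} (ha : G.Adj a u) (hb : G.Adj b u)
    (h1 : Dl G g a l) (h2 : Dl G g b m) : Dl G g u (l ++ m) := by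
  have := D.node u a b _ _ ha hb h1 h2
  simpa [Dl] using this


theorem Dl.leaf {g : ℕ → Bool → V} {u : V} {k : ℕ} (h : u = pe g k) : Dl G g u [k] := by
  subst h
  exact D.leaf _


theorem block {g : ℕ → Bool → V} (h1 : ∀ i j, G.Adj (g i j) (g (i + 1) j))
    (h2 : ∀ i j, G.Adj (g i j) (g i (!j))) {k : ℕ} (hk : k % 3 = 0) (j : Bool) :
    (∃ l : List ℕ, l.Nodup ∧ (∀ x ∈ l, x = k ∨ x = k + 1) ∧ Dl G g (g k j) l) ∧
    (∃ l : List ℕ, l.Nodup ∧ (∀ x ∈ l, x = k ∨ x = k + 1) ∧ Dl G g (g (k + 1) j) l) := by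
  have hk1 : ¬ (k + 1) % 3 = 0 := by omega
  have a : Dl G g (g k true) [k] := Dl.leaf (by simp [pe, hk])
  have b : Dl G g (g (k + 1) false) [k + 1] := Dl.leaf (by simp [pe, hk1])
  have c : Dl G g (g k false) ([k] ++ [k + 1]) := Dl.node (h2 k true) (h1 k false).symm a b
  have d : Dl G g (g (k + 1) true) ([k] ++ [k + 1]) :=
    Dl.node (h1 k true) (h2 (k + 1) false) a b
  cases j
  · exact ⟨⟨_, by simp, by simp, c⟩, ⟨_, by simp, by simp, b⟩⟩
  · exact ⟨⟨_, by simp, by simp, a⟩, ⟨_, by simp, by simp, d⟩⟩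

/-- The columns that carry a pebble. -/
def cols (n : ℕ) : Finset ℕ := (Finset.range n).filter (fun k => k % 3 ≠ 2)

theorem card_cols (n : ℕ) : (cols n).card = (2 * n + 2) / 3 := by
  induction n with
  | zero => rfl
  | succ n ih =>
    unfold cols at ih ⊢
    rw [Finset.range_add_one, Finset.filter_insert]
    split_ifs with h
    · have h' : n % 3 ≠ 2 := h
      rw [Finset.card_insert_of_notMem (by simp), ih]
      have h3 : n % 3 = 0 ∨ n % 3 = 1 := by omega
      rcases h3 with h3 | h3 <;> omega
    · have h' : ¬ n % 3 ≠ 2 := h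
      rw [ih]; omega

theorem upper [Fintype V] (n : ℕ) (hn : 5 ≤ n) (g : ℕ → Bool → V) (fl : Bool)
    (h1 : ∀ i j, G.Adj (g i j) (g (i + 1) j)) (h2 : ∀ i j, G.Adj (g i j) (g i (!j)))
    (hw : ∀ j, g n j = g 0 (j ^^ fl))
    (hinj : ∀ i j i' j', i < n → i' < n → g i j = g i' j' → i = i')
    (hsurj : ∀ v, ∃ i j, i < n ∧ v = g i j) :
    ∃ p : V → ℕ, Solvable G p ∧ ∑ v, p v = (2 * n + 2) / 3 := by
  have hpe : Set.InjOn (pe g) (cols n : Set ℕ) := by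
    intro a ha b hb hab
    simp [cols] at ha hb
    exact hinj _ _ _ _ ha.1 hb.1 hab
  refine ⟨fun v => if v ∈ (cols n).image (pe g) then 1 else 0, ?_, ?_⟩
  swap
  · rw [Finset.sum_boole]
    simp only [Finset.filter_univ_mem, Nat.cast_id]
    rw [Finset.card_image_of_injOn hpe, card_cols]
  have fin : ∀ (u : V) (l : List ℕ), l.Nodup → (∀ k ∈ l, k < n ∧ k % 3 ≠ 2) → Dl G g u l →
      KReachable G (fun v => if v ∈ (cols n).image (pe g) then 1 else 0) u 1 := by
    intro u l hl hk hD
    refine kreach_of_tree hD fun x => ?_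
    have nd : (l.map (pe g)).Nodup := by
      refine hl.map_on fun a ha b hb hab => hpe ?_ ?_ hab
      · simpa [cols] using hk a ha
      · simpa [cols] using hk b hb
    rw [Multiset.coe_count]
    split_ifs with hx
    · exact List.nodup_iff_count_le_one.1 nd x
    · rw [Nat.le_zero, List.count_eq_zero]
      intro hm
      apply hx
      obtain ⟨k, hk1, rfl⟩ := List.mem_map.1 hm
      exact Finset.mem_image_of_mem _ (by simpa [cols] using hk k hk1)
  have b0 : ∀ j, ∃ l : List ℕ, l.Nodup ∧ (∀ x ∈ l, x = 0 ∨ x = 1) ∧ Dl G g (g n j) l := by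
    intro j
    rw [hw]
    exact (block h1 h2 (k := 0) rfl _).1
  have bl : ∀ m, n = m + 1 → m % 3 = 0 → ∀ j, ∃ l : List ℕ, l.Nodup ∧
      (∀ x ∈ l, x = m ∨ x = 0 ∨ x = 1) ∧ Dl G g (g m j) l := by
    intro m hm hm3 j
    have a : Dl G g (g m true) [m] := Dl.leaf (by simp [pe, hm3])
    cases j
    · obtain ⟨l, l1, l2, l3⟩ := b0 false
      rw [hm] at l3
      refine ⟨_, ?_, ?_, Dl.node (h2 m true) (h1 m false).symm a l3⟩
      · simp only [List.singleton_append, List.nodup_cons]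
        exact ⟨fun h => by have := l2 _ h; omega, l1⟩
      · intro x hx
        simp only [List.singleton_append, List.mem_cons] at hx
        rcases hx with hx | hx
        · exact Or.inl hx
        · exact Or.inr (l2 x hx)
    · exact ⟨_, by simp, by simp, a⟩
  intro v
  obtain ⟨i, j, hi, rfl⟩ := hsurj v
  have h3 : i % 3 = 0 ∨ i % 3 = 1 ∨ i % 3 = 2 := by omega
  rcases h3 with h3 | h3 | h3
  · by_cases hi1 : i + 1 < n
    · obtain ⟨l, l1, l2, l3⟩ := (block h1 h2 h3 j).1
      exact fin _ l l1 (fun k hk => by have := l2 k hk; omega) l3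
    · obtain ⟨l, l1, l2, l3⟩ := bl i (by omega) h3 j
      exact fin _ l l1 (fun k hk => by have := l2 k hk; omega) l3
  · obtain ⟨m, rfl⟩ : ∃ m, i = m + 1 := ⟨i - 1, by omega⟩
    obtain ⟨l, l1, l2, l3⟩ := (block h1 h2 (k := m) (by omega) j).2
    exact fin _ l l1 (fun k hk => by have := l2 k hk; omega) l3
  · obtain ⟨m, rfl⟩ : ∃ m, i = m + 1 + 1 := ⟨i - 2, by omega⟩
    obtain ⟨l, l1, l2, l3⟩ := (block h1 h2 (k := m) (by omega) j).2
    have R : ∃ r : List ℕ, r.Nodup ∧ (∀ x ∈ r, x < n ∧ x % 3 ≠ 2 ∧ x ≠ m ∧ x ≠ m + 1) ∧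
        Dl G g (g (m + 1 + 1 + 1) j) r := by
      by_cases c1 : m + 1 + 1 + 1 = n
      · obtain ⟨r, r1, r2, r3⟩ := b0 j
        refine ⟨r, r1, fun x hx => ?_, by rwa [c1]⟩
        have := r2 x hx
        omega
      · by_cases c2 : m + 1 + 1 + 1 + 1 = n
        · obtain ⟨r, r1, r2, r3⟩ := bl _ c2.symm (by omega) j
          refine ⟨r, r1, fun x hx => ?_, r3⟩
          have := r2 x hx
          omega
        · obtain ⟨r, r1, r2, r3⟩ := (block h1 h2 (k := m + 1 + 1 + 1) (by omega) j).1
          refine ⟨r, r1, fun x hx => ?_, r3⟩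
          have := r2 x hx
          omega
    obtain ⟨r, r1, r2, r3⟩ := R
    refine fin _ (l ++ r) ?_ ?_ (Dl.node (h1 _ _) (h1 _ _).symm l3 r3)
    · refine List.Nodup.append l1 r1 ?_
      intro x hx hy
      have := l2 x hx
      have := r2 x hy
      omega
    · intro k hk
      rcases List.mem_append.1 hk with hk | hk
      · have := l2 k hk
        omega
      · have := r2 k hk
        omega

theorem optRub_eq [Fintype V] {m : ℕ} (hlow : ∀ p, Solvable G p → m ≤ ∑ v, p v)
    (hup : ∃ p : V → ℕ, Solvable G p ∧ ∑ v, p v = m) : optRub G = m := by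
  refine le_antisymm (Nat.sInf_le hup) (le_csInf ⟨m, hup⟩ ?_)
  rintro _ ⟨p, hp, rfl⟩
  exact hlow p hp

end

/-! ### The prism -/

/-- covering map of the prism -/
def fP (m : ℕ) (i : ℤ) (j : Bool) : Fin (m + 2) × Fin 2 :=
  (((i : ZMod (m + 2)) : Fin (m + 2)), bif j then 0 else 1)

/-- covering map of the Möbius ladder -/
def fM (n : ℕ) (i : ℤ) (j : Bool) : ZMod (2 * n) := (i : ZMod (2 * n)) + bif j then 0 else (n : ZMod (2 * n))

theorem sum_zmod (m : ℕ) [NeZero m] (F : ZMod m → ℕ) :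
    ∑ i ∈ Finset.range m, F ((i : ℤ) : ZMod m) = ∑ x, F x := by
  refine Finset.sum_nbij' (fun i => ((i : ℤ) : ZMod m)) (fun x => x.val) ?_ ?_ ?_ ?_ ?_
  · simp
  · intro x _
    simpa using ZMod.val_lt x
  · intro i hi
    simp only [Int.cast_natCast]
    exact ZMod.val_cast_of_lt (by simpa using hi)
  · intro x _
    simp
  · simp

theorem adjP (m : ℕ) (x y : Fin (m + 2)) (k l : Fin 2) : (prism (m + 2)).Adj (x, k) (y, l) ↔
    ((x - y = 1 ∨ y - x = 1) ∧ k = l) ∨ (k ≠ l ∧ x = y) := by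
  unfold prism
  rw [boxProd_adj, cycleGraph_adj, pathGraph_adj]
  simp only
  have : ((k : ℕ) + 1 = l ∨ (l : ℕ) + 1 = k) ↔ k ≠ l := by
    fin_cases k <;> fin_cases l <;> simp
  rw [this]

theorem auxz1 (M : ℕ) (x : ZMod M) (i : ℤ) (h : x - i = 1) : x = ((i + 1 : ℤ) : ZMod M) := by
  push_cast
  linear_combination h

theorem auxz2 (M : ℕ) (x : ZMod M) (i : ℤ) (h : i - x = 1) : x = ((i - 1 : ℤ) : ZMod M) := by
  push_cast
  linear_combination -h

theorem liftP (m : ℕ) (i : ℤ) (j : Bool) (a : Fin (m + 2) × Fin 2)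
    (h : (prism (m + 2)).Adj a (fP m i j)) :
    a = fP m (i - 1) j ∨ a = fP m (i + 1) j ∨ a = fP m i (!j) := by
  obtain ⟨x, k⟩ := a
  have h' := (adjP m _ _ _ _).1 h
  clear h
  rcases h' with ⟨h | h, rfl⟩ | ⟨h, e⟩
  · right; left
    refine Prod.ext ?_ rfl
    exact auxz1 (m + 2) x i h
  · left
    refine Prod.ext ?_ rfl
    exact auxz2 (m + 2) x i h
  · right; right
    refine Prod.ext e ?_
    change k = bif !j then 0 else 1
    clear e
    revert j k
    decide

theorem adjP1 (m : ℕ) (i : ℤ) (j : Bool) : (prism (m + 2)).Adj (fP m i j) (fP m (i + 1) j) := by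
  refine (adjP m _ _ _ _).2 ?_
  refine Or.inl ⟨Or.inr ?_, rfl⟩
  change (((i + 1 : ℤ) : ZMod (m + 2)) - (i : ZMod (m + 2)) : ZMod (m + 2)) = 1
  push_cast; ring

theorem adjP2 (m : ℕ) (i : ℤ) (j : Bool) : (prism (m + 2)).Adj (fP m i j) (fP m i (!j)) := by
  refine (adjP m _ _ _ _).2 ?_
  refine Or.inr ⟨?_, rfl⟩
  cases j <;> simp

theorem lowP (n : ℕ) (hn : 4 ≤ n) (p : Fin n × Fin 2 → ℕ) (hp : Solvable (prism n) p) :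
    (2 * n + 2) / 3 ≤ ∑ v, p v := by
  obtain ⟨m, rfl⟩ : ∃ m, n = m + 2 := ⟨n - 2, by omega⟩
  have h := lower (fP m) (liftP m) (m + 2) (fun i l => by
    unfold fP
    refine Prod.ext ?_ rfl
    change ((i + (m + 2 : ℕ) : ℤ) : ZMod (m + 2)) = (i : ZMod (m + 2))
    have : ((m + 2 : ℕ) : ZMod (m + 2)) = 0 := ZMod.natCast_self _
    rw [Int.cast_add, Int.cast_natCast, this, add_zero]) hp
  have e := sum_zmod (m + 2) (fun x => p ((x : Fin (m + 2)), 0) + p ((x : Fin (m + 2)), 1))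
  have e2 : ∑ v, p v = ∑ x : Fin (m + 2), (p (x, 0) + p (x, 1)) := by
    rw [Fintype.sum_prod_type]
    simp
  have e3 : ∑ i ∈ Finset.range (m + 2), (p (fP m i true) + p (fP m i false)) = ∑ v, p v := by
    rw [e2]
    exact e
  rw [e3] at h
  omega

theorem upP (n : ℕ) (hn : 5 ≤ n) :
    ∃ p : Fin n × Fin 2 → ℕ, Solvable (prism n) p ∧ ∑ v, p v = (2 * n + 2) / 3 := by
  obtain ⟨m, rfl⟩ : ∃ m, n = m + 2 := ⟨n - 2, by omega⟩
  refine upper (m + 2) hn (fun k j => fP m (k : ℤ) j) false (fun i j => ?_) (fun i j => adjP2 m i j)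
    (fun j => ?_) ?_ ?_
  · have := adjP1 m i j
    push_cast
    exact this
  · unfold fP
    refine Prod.ext ?_ (by simp)
    change ((((m + 2 : ℕ) : ℤ)) : ZMod (m + 2)) = (((0 : ℕ) : ℤ) : ZMod (m + 2))
    rw [Int.cast_natCast, ZMod.natCast_self]
    simp
  · intro i j i' j' hi hi' h
    have h1 : ((i : ℤ) : ZMod (m + 2)) = ((i' : ℤ) : ZMod (m + 2)) := congrArg Prod.fst h
    rw [Int.cast_natCast, Int.cast_natCast, ZMod.natCast_eq_natCast_iff', Nat.mod_eq_of_lt hi,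
      Nat.mod_eq_of_lt hi'] at h1
    exact h1
  · rintro ⟨x, k⟩
    refine ⟨x.val, decide (k = 0), x.isLt, ?_⟩
    unfold fP
    refine Prod.ext ?_ ?_
    · have : (((x.val : ℕ) : ℤ) : ZMod (m + 2)) = (x : ZMod (m + 2)) := by
        rw [Int.cast_natCast]
        exact ZMod.natCast_zmod_val (n := m + 2) x
      exact this.symm
    · fin_cases k <;> simp

theorem upP4 : ∃ p : Fin 4 × Fin 2 → ℕ, Solvable (prism 4) p ∧ ∑ v, p v = 3 := by
  let c : Fin 4 × Fin 2 := (0, 0)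
  let d : Fin 4 × Fin 2 := (2, 1)
  refine ⟨fun x => Multiset.count x {c, c, d}, ?_, by decide⟩
  have key : ∀ u s, D (prism 4) u s → s ≤ {c, c, d} →
      KReachable (prism 4) (fun x => Multiset.count x {c, c, d}) u 1 :=
    fun u s h hs => kreach_of_tree h fun x => Multiset.count_le_of_le x hs
  have A : ∀ u, (prism 4).Adj c u → D (prism 4) u ({c} + {c}) :=
    fun u h => D.node u c c _ _ h h (D.leaf _) (D.leaf _)
  have B : ∀ u a, (prism 4).Adj c a → (prism 4).Adj a u → (prism 4).Adj d u →
      D (prism 4) u ({c} + {c} + {d}) :=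
    fun u a h1 h2 h3 => D.node u a d _ _ h2 h3 (A a h1) (D.leaf _)
  have h0 : ∀ x y : Fin 4, ∀ k l : Fin 2, (prism 4).Adj (x, k) (y, l) ↔
    ((x - y = 1 ∨ y - x = 1) ∧ k = l) ∨ (k ≠ l ∧ x = y) := adjP 2
  rintro ⟨x, k⟩
  have hx : x = 0 ∨ x = 1 ∨ x = 2 ∨ x = 3 := by revert x; decide
  have hk : k = 0 ∨ k = 1 := by revert k; decide
  rcases hx with rfl | rfl | rfl | rfl <;> rcases hk with rfl | rfl
  · exact key _ _ (D.leaf _) (by decide)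
  · exact key _ _ (A _ ((h0 _ _ _ _).2 (by decide))) (by decide)
  · exact key _ _ (A _ ((h0 _ _ _ _).2 (by decide))) (by decide)
  · exact key _ _ (B _ (1, 0) ((h0 _ _ _ _).2 (by decide)) ((h0 _ _ _ _).2 (by decide))
      ((h0 _ _ _ _).2 (by decide))) (by decide)
  · exact key _ _ (B _ (1, 0) ((h0 _ _ _ _).2 (by decide)) ((h0 _ _ _ _).2 (by decide))
      ((h0 _ _ _ _).2 (by decide))) (by decide)
  · exact key _ _ (D.leaf _) (by decide)
  · exact key _ _ (A _ ((h0 _ _ _ _).2 (by decide))) (by decide)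
  · exact key _ _ (B _ (3, 0) ((h0 _ _ _ _).2 (by decide)) ((h0 _ _ _ _).2 (by decide))
      ((h0 _ _ _ _).2 (by decide))) (by decide)

/-! ### The Möbius ladder -/

theorem adjM (n : ℕ) (x y : ZMod (2 * n)) : (mobiusLadder n).Adj x y ↔ x ≠ y ∧
    ((x - y = 1 ∨ x - y = (n : ZMod (2 * n))) ∨ (y - x = 1 ∨ y - x = (n : ZMod (2 * n)))) := by
  simp [mobiusLadder]

theorem nn (n : ℕ) : (n : ZMod (2 * n)) + n = 0 := by
  have : ((2 * n : ℕ) : ZMod (2 * n)) = 0 := ZMod.natCast_self _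
  rw [← this]; push_cast; ring

theorem liftM (n : ℕ) (i : ℤ) (j : Bool) (a : ZMod (2 * n))
    (h : (mobiusLadder n).Adj a (fM n i j)) :
    a = fM n (i - 1) j ∨ a = fM n (i + 1) j ∨ a = fM n i (!j) := by
  rw [adjM] at h
  have h0 := nn n
  unfold fM at *
  obtain ⟨-, (h | h) | (h | h)⟩ := h
  · right; left
    push_cast
    linear_combination h
  · right; right
    cases j <;> simp only [Bool.not_true, Bool.not_false, cond_true, cond_false] at *
    · linear_combination h + h0
    · linear_combination h
  · left
    push_cast
    linear_combination -h
  · right; right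
    cases j <;> simp only [Bool.not_true, Bool.not_false, cond_true, cond_false] at *
    · linear_combination -h
    · linear_combination -h - h0

theorem one_ne (n : ℕ) (hn : 4 ≤ n) : (1 : ZMod (2 * n)) ≠ 0 := by
  have : Fact (1 < 2 * n) := ⟨by omega⟩
  exact one_ne_zero

theorem n_ne (n : ℕ) (hn : 4 ≤ n) : (n : ZMod (2 * n)) ≠ 0 := by
  intro h
  rw [ZMod.natCast_eq_zero_iff] at h
  have := Nat.le_of_dvd (by omega) h
  omega

theorem adjM1 (n : ℕ) (hn : 4 ≤ n) (i : ℤ) (j : Bool) :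
    (mobiusLadder n).Adj (fM n i j) (fM n (i + 1) j) := by
  rw [adjM]
  have e : fM n (i + 1) j - fM n i j = 1 := by unfold fM; push_cast; ring
  refine ⟨fun h => one_ne n hn ?_, Or.inr (Or.inl e)⟩
  rw [← e, h, sub_self]

theorem adjM2 (n : ℕ) (hn : 4 ≤ n) (i : ℤ) (j : Bool) :
    (mobiusLadder n).Adj (fM n i j) (fM n i (!j)) := by
  rw [adjM]
  have e : fM n i j - fM n i (!j) = n := by
    have h0 := nn n
    unfold fM
    cases j <;> simp only [Bool.not_true, Bool.not_false, cond_true, cond_false]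
    · ring
    · linear_combination -h0
  refine ⟨fun h => n_ne n hn ?_, Or.inl (Or.inr e)⟩
  rw [← e, ← h, sub_self]

theorem lowM (n : ℕ) (hn : 4 ≤ n) [NeZero (2 * n)] (p : ZMod (2 * n) → ℕ)
    (hp : Solvable (mobiusLadder n) p) : (2 * n + 2) / 3 ≤ ∑ v, p v := by
  have h := lower (fM n) (liftM n) (2 * n) (fun i l => by
    unfold fM
    have : ((2 * n : ℕ) : ZMod (2 * n)) = 0 := ZMod.natCast_self _
    rw [Int.cast_add, Int.cast_natCast, this, add_zero]) hp
  rw [Finset.sum_add_distrib] at h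
  have e1 : ∑ i ∈ Finset.range (2 * n), p (fM n i true) = ∑ v, p v := by
    rw [← sum_zmod (2 * n) p]
    simp [fM]
  have e2 : ∑ i ∈ Finset.range (2 * n), p (fM n i false) = ∑ v, p v := by
    have := sum_zmod (2 * n) (fun x => p (x + n))
    rw [← Equiv.sum_comp (Equiv.addRight (n : ZMod (2 * n))) p]
    exact this
  rw [e1, e2] at h
  omega

theorem upM (n : ℕ) (hn : 5 ≤ n) [NeZero (2 * n)] :
    ∃ p : ZMod (2 * n) → ℕ, Solvable (mobiusLadder n) p ∧ ∑ v, p v = (2 * n + 2) / 3 := by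
  refine upper n hn (fun k j => fM n (k : ℤ) j) true (fun i j => ?_)
    (fun i j => adjM2 n (by omega) i j) (fun j => ?_) ?_ ?_
  · have := adjM1 n (by omega) i j
    push_cast
    exact this
  · have h0 := nn n
    unfold fM
    cases j <;> simp
    exact h0
  · intro i j i' j' hi hi' h
    have : ∀ (i : ℕ) (j : Bool), fM n (i : ℤ) j = ((i + bif j then 0 else n : ℕ) : ZMod (2 * n)) := by
      intro i j
      unfold fM
      cases j <;> simp
    simp only [this] at h
    rw [ZMod.natCast_eq_natCast_iff', Nat.mod_eq_of_lt, Nat.mod_eq_of_lt] at h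
    · cases j <;> cases j' <;> simp only [cond_true, cond_false] at h <;> omega
    · cases j' <;> simp only [cond_true, cond_false] <;> omega
    · cases j <;> simp only [cond_true, cond_false] <;> omega
  · intro v
    have hv := ZMod.val_lt v
    have e : ((v.val : ℕ) : ZMod (2 * n)) = v := ZMod.natCast_zmod_val v
    by_cases h : v.val < n
    · exact ⟨v.val, true, h, by simp [fM]⟩
    · refine ⟨v.val - n, false, by omega, ?_⟩
      unfold fM
      simp only [cond_false, Int.cast_natCast]
      rw [← Nat.cast_add, Nat.sub_add_cancel (by omega), e]

theorem upM4 [NeZero (2 * 4)] :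
    ∃ p : ZMod (2 * 4) → ℕ, Solvable (mobiusLadder 4) p ∧ ∑ v, p v = 3 := by
  let S : Multiset (ZMod (2 * 4)) := {0, 2, 5}
  refine ⟨fun x => Multiset.count x S, ?_, ?_⟩
  swap
  · have : ∑ v : ZMod (2 * 4), Multiset.count v S = Multiset.card S :=
      Multiset.sum_count_eq_card (fun a _ => Finset.mem_univ a)
    rw [this]
    rfl
  have key : ∀ u s, D (mobiusLadder 4) u s → s ≤ S →
      KReachable (mobiusLadder 4) (fun x => Multiset.count x S) u 1 :=
    fun u s h hs => kreach_of_tree h fun x => Multiset.count_le_of_le x hs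
  have A : ∀ u a b, (mobiusLadder 4).Adj a u → (mobiusLadder 4).Adj b u →
      D (mobiusLadder 4) u ({a} + {b}) :=
    fun u a b h1 h2 => D.node u a b _ _ h1 h2 (D.leaf _) (D.leaf _)
  have B : ∀ u a b v c, (mobiusLadder 4).Adj a v → (mobiusLadder 4).Adj b v →
      (mobiusLadder 4).Adj v u → (mobiusLadder 4).Adj c u →
      D (mobiusLadder 4) u ({a} + {b} + {c}) :=
    fun u a b v c h1 h2 h3 h4 => D.node u v c _ _ h3 h4 (A v a b h1 h2) (D.leaf _)
  have h0 := adjM 4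
  intro x
  have hx : x = 0 ∨ x = 1 ∨ x = 2 ∨ x = 3 ∨ x = 4 ∨ x = 5 ∨ x = 6 ∨ x = 7 := by
    revert x; decide
  rcases hx with rfl | rfl | rfl | rfl | rfl | rfl | rfl | rfl
  · exact key _ _ (D.leaf _) (by decide)
  · exact key _ _ (A _ 0 2 ((h0 _ _).2 (by decide)) ((h0 _ _).2 (by decide))) (by decide)
  · exact key _ _ (D.leaf _) (by decide)
  · exact key _ _ (B _ 0 5 4 2 ((h0 _ _).2 (by decide)) ((h0 _ _).2 (by decide))
      ((h0 _ _).2 (by decide)) ((h0 _ _).2 (by decide))) (by decide)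
  · exact key _ _ (A _ 0 5 ((h0 _ _).2 (by decide)) ((h0 _ _).2 (by decide))) (by decide)
  · exact key _ _ (D.leaf _) (by decide)
  · exact key _ _ (A _ 2 5 ((h0 _ _).2 (by decide)) ((h0 _ _).2 (by decide))) (by decide)
  · exact key _ _ (B _ 2 5 6 0 ((h0 _ _).2 (by decide)) ((h0 _ _).2 (by decide))
      ((h0 _ _).2 (by decide)) ((h0 _ _).2 (by decide))) (by decide)

end Rub

/-- The Möbius ladder of length `n ≥ 4` has the same optimal rubbling number as the
`n`-prism. -/
theorem optRub_mobiusLadder (n : ℕ) (hn : 4 ≤ n) :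
    letI : NeZero (2 * n) := ⟨by omega⟩
    optRub (mobiusLadder n) = optRub (prism n) := by
  have inst : NeZero (2 * n) := ⟨by omega⟩
  have hM : optRub (mobiusLadder n) = (2 * n + 2) / 3 := by
    refine Rub.optRub_eq (Rub.lowM n hn) ?_
    by_cases h : n = 4
    · subst h
      exact Rub.upM4
    · exact Rub.upM n (by omega)
  have hP : optRub (prism n) = (2 * n + 2) / 3 := by
    refine Rub.optRub_eq (Rub.lowP n hn) ?_
    by_cases h : n = 4
    · subst h
      exact Rub.upP4
    · exact Rub.upP n (by omega)
  rw [hM, hP]
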